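/- Let p be an odd prime, G a finite powerful p-group, and i ≥ 1. Then the quotient group H = Ω_i(G^p) / (Ω_i(G^p))^{p²} is powerfully nilpotent of powerful nilpotency class at most 2; in particular, writing N = (Ω_i(G^p))^{p²} and M = Ω_i(G^{p²})·N / N, the chain {1} ≤ M ≤ H is a powerfully central chain of H. -/

import Mathlib

/-!
The two containments to prove are `[W, W] ≤ Ω_i(G^{p²})^p` and `[Ω_i(G^{p²}), W] ≤ W^{p²}`, where
`W = Ω_i(G^p)`. Both right-hand sides are normal in `G`, so it suffices to treat commutators of
generators (`commutator_omega_le`, `commutator_omega_two_le`).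

In a powerful `p`-group with `p` odd, the subgroup `P k = G^{p^k}` consists of `p^k`-th powers
(`exists_pow_eq_of_mem_agemo`) and `[P a, P b] ≤ P (a + b + 1)` (`agemo_commutator`). So for
generators `x = a^p`, `y = b^p` of `W`, the commutator `[x, y]` is `c^{p³} = (c^{p²})^p`, and
`c^{p²}` has order dividing `p^i` as soon as `[x, y]^{p^{i-1}} = 1`. Likewise, for `x = a^{p²}` and
`y = b^p`, the commutator is `(c^{p²})^{p²}`, and `[x, y]^{p^{i-2}} = 1` is needed (`[x, y] = 1` when
`i = 1`).

These order bounds rest on `core`: in a powerful group the elements of order dividing `p` form a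
subgroup, and for `i = 1, 2` an element `g^{p^i}` of order dividing `p` commutes with the elements of
order dividing `p^i`. The proof is by induction on `|G|`. If `y^p = 1` then `[x, y]` is a product of
two elements of order dividing `p` in the powerful subgroup `⟨y⟩G^p`, so `[x, y]^p = 1` by induction.
For `i = 2`, let `D` be generated by all `[g^{p²}, y]`. Induction applied to `G / [D, G]` gives
`D ≤ [D, G]`, hence `D = 1`, unless `D` is central; in the central case `z = [g^p, y]` satisfies
`z^p = 1`, and `[g^p, z] ∈ D` is central, which gives `[g^{p²}, y] = 1` because `p` divides
`p.choose 2`. The case `i = 1` and the statement on products follow from the case `i = 2` by the same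
identities. The bounds for larger orders follow by repeatedly factoring out the subgroup of elements
of order dividing `p` (`commEl_one_one_pow`, `commEl_two_one_pow`).
-/

/-- The subgroup generated by the `n`-th powers of the elements of `H`. -/
def subgroupPow {G : Type*} [Group G] (H : Subgroup G) (n : ℕ) : Subgroup G :=
  Subgroup.closure {x | ∃ h ∈ H, h ^ n = x}

/-- `Ω_i(H)`: the subgroup generated by the elements of `H` whose order divides `p ^ i`. -/
def omegaSubgroup {G : Type*} [Group G] (p i : ℕ) (H : Subgroup G) : Subgroup G :=
  Subgroup.closure {x | x ∈ H ∧ x ^ p ^ i = 1}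

/-- A finite `p`-group `G` is powerful if `[G,G] ≤ G^p` when `p` is odd,
and `[G,G] ≤ G^4` when `p = 2`. -/
def IsPowerful (p : ℕ) (G : Type*) [Group G] : Prop :=
  if p = 2 then commutator G ≤ subgroupPow (⊤ : Subgroup G) 4
  else commutator G ≤ subgroupPow (⊤ : Subgroup G) p

/-- The subgroup of `n`-th powers of the whole group is normal (indeed characteristic). -/
instance subgroupPow_top_normal {G : Type*} [Group G] (n : ℕ) :
    (subgroupPow (⊤ : Subgroup G) n).Normal := by
  constructor
  intro x hx g
  have key : Subgroup.map (MulAut.conj g).toMonoidHom (subgroupPow (⊤ : Subgroup G) n)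
      ≤ subgroupPow (⊤ : Subgroup G) n := by
    rw [subgroupPow, MonoidHom.map_closure]
    apply Subgroup.closure_le _ |>.mpr
    rintro y ⟨z, ⟨h, -, rfl⟩, rfl⟩
    exact Subgroup.subset_closure ⟨(MulAut.conj g) h, trivial, by
      simp [((MulAut.conj g).toMonoidHom.map_pow h n).symm]⟩
  have hmem : (MulAut.conj g) x ∈
      Subgroup.map (MulAut.conj g).toMonoidHom (subgroupPow (⊤ : Subgroup G) n) :=
    Subgroup.mem_map_of_mem _ hx
  simpa [MulAut.conj_apply] using key hmem

/-- A powerfully central chain `{1} = H 0 ≤ H 1 ≤ ⋯ ≤ H n = G` of length `n`: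
`[H (k+1), G] ≤ (H k)^p` for all `k < n`. -/
def IsPowerfullyCentralChain (p : ℕ) {G : Type*} [Group G] (n : ℕ) (H : ℕ → Subgroup G) : Prop :=
  H 0 = ⊥ ∧ H n = ⊤ ∧ (∀ k, k < n → H k ≤ H (k + 1)) ∧
    ∀ k, k < n → ⁅H (k + 1), (⊤ : Subgroup G)⁆ ≤ subgroupPow (H k) p

/-- A group is powerfully nilpotent if it is powerful and admits a powerfully central chain. -/
def IsPowerfullyNilpotent (p : ℕ) (G : Type*) [Group G] : Prop :=
  IsPowerful p G ∧ ∃ (n : ℕ) (H : ℕ → Subgroup G), IsPowerfullyCentralChain p n H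

/-- The powerful nilpotency class: the least possible length of a powerfully central chain. -/
noncomputable def powerfulNilpotencyClass (p : ℕ) (G : Type*) [Group G] : ℕ :=
  sInf {n | ∃ H : ℕ → Subgroup G, IsPowerfullyCentralChain p n H}


universe u

open scoped commutatorElement

/-! ### Commutator and power identities -/

section Identities

variable {G : Type u} [Group G]

theorem commEl_pow_left {x y : G} (h : Commute x ⁅x, y⁆) (n : ℕ) :
    ⁅x ^ n, y⁆ = ⁅x, y⁆ ^ n := by
  induction n with
  | zero => simp
  | succ n ih =>
    have e : ⁅x ^ (n + 1), y⁆ = x * ⁅x ^ n, y⁆ * x⁻¹ * ⁅x, y⁆ := by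
      simp only [commutatorElement_def, pow_succ', mul_inv_rev]; group
    rw [e, ih, (h.pow_right n).eq, mul_inv_cancel_right, pow_succ]

theorem commEl_pow_right {x y : G} (h : Commute y ⁅x, y⁆) (n : ℕ) :
    ⁅x, y ^ n⁆ = ⁅x, y⁆ ^ n := by
  have h' : Commute y ⁅y, x⁆ := by
    rw [← commutatorElement_inv x y]; exact h.inv_right
  rw [← commutatorElement_inv (y ^ n) x, commEl_pow_left h' n, ← inv_pow, commutatorElement_inv]

theorem commEl_pow_left_two {x y : G} (h1 : Commute x ⁅x, ⁅x, y⁆⁆)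
    (h2 : Commute ⁅x, y⁆ ⁅x, ⁅x, y⁆⁆) (n : ℕ) :
    ⁅x ^ n, y⁆ = ⁅x, ⁅x, y⁆⁆ ^ (n.choose 2) * ⁅x, y⁆ ^ n := by
  induction n with
  | zero => simp
  | succ n ih =>
    have e : ⁅x ^ (n + 1), y⁆ = x * ⁅x ^ n, y⁆ * x⁻¹ * ⁅x, y⁆ := by
      simp only [commutatorElement_def, pow_succ', mul_inv_rev]; group
    have e2 : x * ⁅x, y⁆ ^ n * x⁻¹ = ⁅x, ⁅x, y⁆⁆ ^ n * ⁅x, y⁆ ^ n := by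
      rw [← h2.symm.mul_pow, ← conj_pow]
      congr 1
      rw [commutatorElement_def x ⁅x, y⁆]; group
    have e3 : (n + 1).choose 2 = n.choose 2 + n := by
      rw [Nat.choose_succ_succ' n 1, Nat.choose_one_right, add_comm]
    rw [e, ih, ← mul_assoc, (h1.pow_right _).eq, mul_assoc _ x, mul_assoc _ _ x⁻¹, e2, e3,
      pow_add, pow_succ]
    simp only [mul_assoc]

theorem mul_pow_two {x y : G} (h1 : Commute x ⁅y, x⁆) (h2 : Commute y ⁅y, x⁆) (n : ℕ) :
    (x * y) ^ n = x ^ n * y ^ n * ⁅y, x⁆ ^ (n.choose 2) := by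
  induction n with
  | zero => simp
  | succ n ih =>
    have e1 : y ^ n * x = ⁅y, x⁆ ^ n * x * y ^ n := by
      rw [← commEl_pow_left h2 n, commutatorElement_def]; group
    have e3 : (n + 1).choose 2 = n + n.choose 2 := by
      rw [Nat.choose_succ_succ' n 1, Nat.choose_one_right]
    have c : Commute (x * y) ⁅y, x⁆ := h1.mul_left h2
    calc (x * y) ^ (n + 1) = x ^ n * y ^ n * (⁅y, x⁆ ^ (n.choose 2) * (x * y)) := by
          rw [pow_succ, ih, mul_assoc]
      _ = x ^ n * (y ^ n * x) * y * ⁅y, x⁆ ^ (n.choose 2) := by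
          rw [← (c.pow_right _).eq]; simp only [mul_assoc]
      _ = x ^ n * (⁅y, x⁆ ^ n * (x * y ^ (n + 1))) * ⁅y, x⁆ ^ (n.choose 2) := by
          rw [e1, pow_succ y]; simp only [mul_assoc]
      _ = x ^ (n + 1) * y ^ (n + 1) * ⁅y, x⁆ ^ ((n + 1).choose 2) := by
          rw [← ((h1.mul_left (h2.pow_left (n + 1))).pow_right n).eq, e3, pow_succ x,
            pow_add ⁅y, x⁆]
          simp only [mul_assoc]

theorem dvd_choose_two {p : ℕ} (hp : p.Prime) (hp2 : p ≠ 2) : p ∣ p.choose 2 :=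
  hp.dvd_choose_self two_ne_zero (lt_of_le_of_ne hp.two_le (Ne.symm hp2))

/-- If `c = ⁅x, y⁆` has order dividing `p` and `⁅x, c⁆` is central in `⟨x, c⟩`,
then `x ^ p` commutes with `y`: automatically `⁅x, c⁆ ^ p = ⁅x, c ^ p⁆ = 1`. -/
theorem commEl_pow_prime_eq_one {p : ℕ} (hp : p.Prime) (hp2 : p ≠ 2) {x y : G}
    (hc : ⁅x, y⁆ ^ p = 1) (h1 : Commute x ⁅x, ⁅x, y⁆⁆) (h2 : Commute ⁅x, y⁆ ⁅x, ⁅x, y⁆⁆) :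
    ⁅x ^ p, y⁆ = 1 := by
  obtain ⟨k, hk⟩ := dvd_choose_two hp hp2
  have hd : ⁅x, ⁅x, y⁆⁆ ^ p = 1 := by
    rw [← commEl_pow_right h2, hc, commutatorElement_one_right]
  rw [commEl_pow_left_two h1 h2, hc, hk, pow_mul, hd]; simp

theorem mul_pow_prime {p : ℕ} (hp : p.Prime) (hp2 : p ≠ 2) {x y : G}
    (hc : ⁅y, x⁆ ^ p = 1) (h1 : Commute x ⁅y, x⁆) (h2 : Commute y ⁅y, x⁆) :
    (x * y) ^ p = x ^ p * y ^ p := by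
  obtain ⟨k, hk⟩ := dvd_choose_two hp hp2
  rw [mul_pow_two h1 h2, hk, pow_mul, hc]; simp

/-- Two elements commute modulo `N` iff their commutator lies in `N`. -/
theorem commute_mk_iff (N : Subgroup G) [N.Normal] (x y : G) :
    Commute (x : G ⧸ N) (y : G ⧸ N) ↔ ⁅x, y⁆ ∈ N := by
  rw [← commutatorElement_eq_one_iff_commute, ← QuotientGroup.eq_one_iff]
  rfl

theorem commEl_pow_prime_mem {p : ℕ} (hp : p.Prime) (hp2 : p ≠ 2) (N : Subgroup G) [N.Normal]
    {x y : G} (hc : ⁅x, y⁆ ^ p ∈ N) (h1 : ⁅x, ⁅x, ⁅x, y⁆⁆⁆ ∈ N)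
    (h2 : ⁅⁅x, y⁆, ⁅x, ⁅x, y⁆⁆⁆ ∈ N) : ⁅x ^ p, y⁆ ∈ N := by
  rw [← QuotientGroup.eq_one_iff] at hc ⊢
  rw [← commute_mk_iff] at h1 h2
  exact commEl_pow_prime_eq_one (G := G ⧸ N) (x := (x : G ⧸ N)) (y := (y : G ⧸ N)) hp hp2 hc h1 h2

theorem commEl_pow_mem (N : Subgroup G) [N.Normal] {x y : G} {n : ℕ} (hc : ⁅x, y⁆ ^ n ∈ N)
    (h1 : ⁅x, ⁅x, y⁆⁆ ∈ N) : ⁅x ^ n, y⁆ ∈ N := by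
  rw [← QuotientGroup.eq_one_iff] at hc ⊢
  rw [← commute_mk_iff] at h1
  exact (commEl_pow_left (G := G ⧸ N) (x := (x : G ⧸ N)) (y := (y : G ⧸ N)) h1 n).trans hc

theorem mul_pow_prime_mk {p : ℕ} (hp : p.Prime) (hp2 : p ≠ 2) (N : Subgroup G) [N.Normal]
    {x y : G} (hc : ⁅y, x⁆ ^ p ∈ N) (h1 : ⁅x, ⁅y, x⁆⁆ ∈ N) (h2 : ⁅y, ⁅y, x⁆⁆ ∈ N) :
    (((x * y) ^ p : G) : G ⧸ N) = ((x ^ p * y ^ p : G) : G ⧸ N) := by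
  rw [← QuotientGroup.eq_one_iff] at hc
  rw [← commute_mk_iff] at h1 h2
  exact mul_pow_prime (G := G ⧸ N) (x := (x : G ⧸ N)) (y := (y : G ⧸ N)) hp hp2 hc h1 h2

end Identities

/-! ### Generated subgroups, nilpotency and orders -/

section General

variable {G : Type u} [Group G]

theorem closure_normal_of_conj {S : Set G} (h : ∀ x ∈ S, ∀ g : G, g * x * g⁻¹ ∈ S) :
    (Subgroup.closure S).Normal := by
  refine ⟨fun x hx g => ?_⟩
  induction hx using Subgroup.closure_induction with
  | mem x hx => exact Subgroup.subset_closure (h x hx g)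
  | one => simp
  | mul a b _ _ ha hb =>
    have : g * (a * b) * g⁻¹ = (g * a * g⁻¹) * (g * b * g⁻¹) := by group
    rw [this]; exact mul_mem ha hb
  | inv a _ ha =>
    have : g * a⁻¹ * g⁻¹ = (g * a * g⁻¹)⁻¹ := by group
    rw [this]; exact inv_mem ha

theorem subgroupPow_normal (H : Subgroup G) [hH : H.Normal] (n : ℕ) :
    (subgroupPow H n).Normal := by
  refine closure_normal_of_conj ?_
  rintro _ ⟨h, hh, rfl⟩ g
  exact ⟨g * h * g⁻¹, hH.conj_mem h hh g, conj_pow⟩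

instance omegaSubgroup_normal (p i : ℕ) (H : Subgroup G) [hH : H.Normal] :
    (omegaSubgroup p i H).Normal := by
  refine closure_normal_of_conj ?_
  rintro x ⟨h, hx⟩ g
  exact ⟨hH.conj_mem x h g, by rw [conj_pow, hx]; simp⟩

theorem pow_mem_subgroupPow {H : Subgroup G} {x : G} (hx : x ∈ H) (n : ℕ) :
    x ^ n ∈ subgroupPow H n :=
  Subgroup.subset_closure ⟨x, hx, rfl⟩

theorem subgroupPow_le_iff {H K : Subgroup G} {n : ℕ} :
    subgroupPow H n ≤ K ↔ ∀ x ∈ H, x ^ n ∈ K := by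
  rw [subgroupPow, Subgroup.closure_le]
  constructor
  · intro h x hx; exact h ⟨x, hx, rfl⟩
  · rintro h _ ⟨x, hx, rfl⟩; exact h x hx

theorem subgroupPow_mono {H K : Subgroup G} (h : H ≤ K) (n : ℕ) :
    subgroupPow H n ≤ subgroupPow K n :=
  subgroupPow_le_iff.2 fun _ hx => pow_mem_subgroupPow (h hx) n

theorem subgroupPow_le_self (H : Subgroup G) (n : ℕ) : subgroupPow H n ≤ H :=
  subgroupPow_le_iff.2 fun _ hx => pow_mem hx n

theorem map_subgroupPow {G' : Type*} [Group G'] (f : G →* G') (H : Subgroup G) (n : ℕ) :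
    (subgroupPow H n).map f = subgroupPow (H.map f) n := by
  apply le_antisymm
  · rw [Subgroup.map_le_iff_le_comap]
    refine subgroupPow_le_iff.2 fun x hx => ?_
    rw [Subgroup.mem_comap, map_pow]
    exact pow_mem_subgroupPow (Subgroup.mem_map_of_mem f hx) n
  · refine subgroupPow_le_iff.2 ?_
    rintro _ ⟨x, hx, rfl⟩
    rw [← map_pow]
    exact Subgroup.mem_map_of_mem f (pow_mem_subgroupPow hx n)

theorem mem_omegaSubgroup {p i : ℕ} {H : Subgroup G} {x : G} (hx : x ∈ H) (hx' : x ^ p ^ i = 1) :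
    x ∈ omegaSubgroup p i H :=
  Subgroup.subset_closure ⟨hx, hx'⟩

theorem omegaSubgroup_mono {p i : ℕ} {H K : Subgroup G} (h : H ≤ K) :
    omegaSubgroup p i H ≤ omegaSubgroup p i K :=
  Subgroup.closure_mono fun _ hx => ⟨h hx.1, hx.2⟩

/-- Modulo a normal subgroup, commutators of generated subgroups can be tested on generators. -/
theorem commutator_closure_le {S T : Set G} {C : Subgroup G} [C.Normal]
    (h : ∀ s ∈ S, ∀ t ∈ T, ⁅s, t⁆ ∈ C) :
    ⁅Subgroup.closure S, Subgroup.closure T⁆ ≤ C := by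
  have key : ∀ t ∈ T, ∀ s ∈ Subgroup.closure S, ⁅s, t⁆ ∈ C := by
    intro t ht s hs
    rw [← commute_mk_iff]
    induction hs using Subgroup.closure_induction with
    | mem x hx => rw [commute_mk_iff]; exact h x hx t ht
    | one => exact Commute.one_left _
    | mul a b _ _ ha hb => exact Commute.mul_left ha hb
    | inv a _ ha => exact Commute.inv_left ha
  rw [Subgroup.commutator_le]
  intro s hs t ht
  rw [← commute_mk_iff]
  induction ht using Subgroup.closure_induction with
  | mem x hx => rw [commute_mk_iff]; exact key x hx s hs
  | one => exact Commute.one_right _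
  | mul a b _ _ ha hb => exact Commute.mul_right ha hb
  | inv a _ ha => exact Commute.inv_right ha

theorem commutator_subgroupPow_le {H K C : Subgroup G} [C.Normal] {n : ℕ}
    (h : ∀ x ∈ H, ∀ y ∈ K, ⁅x ^ n, y⁆ ∈ C) : ⁅subgroupPow H n, K⁆ ≤ C := by
  rw [← K.closure_eq, subgroupPow]
  refine commutator_closure_le ?_
  rintro _ ⟨x, hx, rfl⟩ y hy
  exact h x hx y hy

/-- In a nilpotent group a nontrivial subgroup is never contained in its commutator with the
whole group. -/
theorem eq_bot_of_le_commutator [Group.IsNilpotent G] {A : Subgroup G} (h : A ≤ ⁅A, ⊤⁆) :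
    A = ⊥ := by
  obtain ⟨n, hn⟩ := Subgroup.nilpotent_iff_lowerCentralSeries.1 (inferInstance : Group.IsNilpotent G)
  have : ∀ k, A ≤ (⊤ : Subgroup G).lowerCentralSeries k := by
    intro k
    induction k with
    | zero => simp
    | succ k ih =>
      exact h.trans (Subgroup.commutator_mono ih le_rfl)
  exact le_bot_iff.1 (hn ▸ this n)

theorem le_of_le_commutator_sup [Group.IsNilpotent G] {A B : Subgroup G} [B.Normal]
    (h : A ≤ ⁅A, ⊤⁆ ⊔ B) : A ≤ B := by
  have h2 : A.map (QuotientGroup.mk' B) = ⊥ := by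
    apply eq_bot_of_le_commutator
    have := Subgroup.map_mono (f := QuotientGroup.mk' B) h
    rw [Subgroup.map_sup, Subgroup.map_commutator, QuotientGroup.map_mk'_self, sup_bot_eq,
      Subgroup.map_top_of_surjective _ (QuotientGroup.mk'_surjective B)] at this
    exact this
  rw [Subgroup.map_eq_bot_iff, QuotientGroup.ker_mk'] at h2
  exact h2

theorem card_subgroup_lt [Finite G] {K : Subgroup G} (h : K ≠ ⊤) : Nat.card K < Nat.card G :=
  lt_of_le_of_ne (Nat.card_le_card_of_injective _ K.subtype_injective)
    fun e => h (Subgroup.eq_top_of_card_eq K e)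

theorem card_quotient_lt [Finite G] {N : Subgroup G} [N.Normal] (h : N ≠ ⊥) :
    Nat.card (G ⧸ N) < Nat.card G := by
  rw [Subgroup.card_eq_card_quotient_mul_card_subgroup N]
  have h1 : 1 < Nat.card N := (Subgroup.one_lt_card_iff_ne_bot N).2 h
  have h2 : 0 < Nat.card (G ⧸ N) := Nat.card_pos
  nlinarith

/-- A finite `p`-group generated by its `p`-th powers is trivial: it would otherwise have a normal
subgroup of index `p`. -/
theorem eq_bot_of_le_subgroupPow {p : ℕ} (hp : p.Prime) [Finite G] (hG : IsPGroup p G)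
    {H : Subgroup G} (h : H ≤ subgroupPow H p) : H = ⊥ := by
  have : Fact p.Prime := ⟨hp⟩
  by_contra hne
  have hH : IsPGroup p H := hG.to_subgroup H
  obtain ⟨n, hn⟩ := IsPGroup.iff_card.1 hH
  have hn0 : n ≠ 0 := by
    rintro rfl
    exact hne (Subgroup.eq_bot_of_card_eq H (by simpa using hn))
  obtain ⟨m, rfl⟩ := Nat.exists_eq_succ_of_ne_zero hn0
  obtain ⟨K, hK⟩ := Sylow.exists_subgroup_card_pow_prime (G := H) p (n := m)
    (hn ▸ pow_dvd_pow p (Nat.le_succ m))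
  have hidx : K.index = p := by
    have := K.card_mul_index
    rw [hK, hn, pow_succ] at this
    exact Nat.eq_of_mul_eq_mul_left (pow_pos hp.pos m) this
  have : K.Normal := by
    apply Subgroup.normal_of_index_eq_minFac_card
    rw [hidx, hn, hp.pow_minFac hn0]
  have hle : subgroupPow (⊤ : Subgroup H) p ≤ K := by
    refine subgroupPow_le_iff.2 fun x _ => ?_
    rw [← hidx]
    exact Subgroup.pow_index_mem K x
  have htop : H ≤ K.map H.subtype := by
    refine h.trans ?_
    have := Subgroup.map_mono (f := H.subtype) hle
    rwa [map_subgroupPow, ← MonoidHom.range_eq_map, Subgroup.range_subtype] at this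
  have hK' : K = ⊤ := by
    rw [eq_top_iff]
    rintro ⟨x, hx⟩ -
    obtain ⟨y, hy, e⟩ := htop hx
    have : y = ⟨x, hx⟩ := Subtype.ext e
    exact this ▸ hy
  rw [hK', Subgroup.index_top] at hidx
  exact hp.one_lt.ne hidx

end General

/-! ### The agemo series of a powerful group -/

/-- A finite powerful `p`-group, with the powerful condition in the form used for odd `p`. -/
structure PowP (p : ℕ) (G : Type u) [Group G] : Prop where
  fin : Finite G
  pgroup : IsPGroup p G
  pow : commutator G ≤ subgroupPow (⊤ : Subgroup G) p

/-- The iterated agemo series `P 0 = G`, `P (k + 1) = (P k) ^ p`. -/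
def agemo (p : ℕ) (G : Type u) [Group G] : ℕ → Subgroup G
  | 0 => ⊤
  | k + 1 => subgroupPow (agemo p G k) p

section Agemo

attribute [local instance] subgroupPow_normal

variable {G : Type u} [Group G] {p : ℕ}

theorem PowP.quotient (h : PowP p G) (N : Subgroup G) [N.Normal] : PowP p (G ⧸ N) where
  fin := by have := h.fin; infer_instance
  pgroup := h.pgroup.to_quotient N
  pow := by
    have := Subgroup.map_mono (f := QuotientGroup.mk' N) h.pow
    rw [map_subgroupPow, commutator_def, Subgroup.map_commutator,
      Subgroup.map_top_of_surjective _ (QuotientGroup.mk'_surjective N)] at this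
    exact this

theorem PowP.subgroup (h : PowP p G) (K : Subgroup G) (hK : ⁅K, K⁆ ≤ subgroupPow K p) :
    PowP p K where
  fin := by have := h.fin; infer_instance
  pgroup := h.pgroup.to_subgroup K
  pow := by
    rw [← Subgroup.map_le_map_iff_of_injective K.subtype_injective, map_subgroupPow,
      commutator_def, Subgroup.map_commutator, ← MonoidHom.range_eq_map, Subgroup.range_subtype]
    exact hK

theorem PowP.isNilpotent (hp : p.Prime) (h : PowP p G) : Group.IsNilpotent G := by
  have := h.fin
  have : Fact p.Prime := ⟨hp⟩
  exact h.pgroup.isNilpotent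

instance agemo_normal (p : ℕ) (k : ℕ) : (agemo p G k).Normal := by
  induction k with
  | zero => exact inferInstanceAs (⊤ : Subgroup G).Normal
  | succ k ih => exact subgroupPow_normal _ _

theorem pow_mem_agemo_succ {k : ℕ} {x : G} (hx : x ∈ agemo p G k) : x ^ p ∈ agemo p G (k + 1) :=
  pow_mem_subgroupPow hx p

theorem agemo_antitone : Antitone (agemo p G) :=
  antitone_nat_of_succ_le fun _ => subgroupPow_le_self _ _

theorem pow_mem_agemo (x : G) (k : ℕ) : x ^ p ^ k ∈ agemo p G k := by
  induction k with
  | zero => exact Subgroup.mem_top _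
  | succ k ih => rw [pow_succ, pow_mul]; exact pow_mem_agemo_succ ih

/-- A powerfully embedded subgroup `N` has powerfully embedded `p`-th power subgroup. -/
theorem commutator_subgroupPow_top_le (hp : p.Prime) (hp2 : p ≠ 2) [Group.IsNilpotent G]
    (N : Subgroup G) [hN : N.Normal] (h : ⁅N, (⊤ : Subgroup G)⁆ ≤ subgroupPow N p) :
    ⁅subgroupPow N p, (⊤ : Subgroup G)⁆ ≤ subgroupPow (subgroupPow N p) p := by
  refine le_of_le_commutator_sup (commutator_subgroupPow_le fun x hx g hg => ?_)
  have hc : ⁅x, g⁆ ∈ subgroupPow N p := h (Subgroup.commutator_mem_commutator hx hg)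
  have hd : ⁅x, ⁅x, g⁆⁆ ∈ ⁅subgroupPow N p, (⊤ : Subgroup G)⁆ := by
    rw [Subgroup.commutator_comm]
    exact Subgroup.commutator_mem_commutator (Subgroup.mem_top _) hc
  have he : ∀ t : G, ⁅t, ⁅x, ⁅x, g⁆⁆⁆ ∈
      ⁅⁅subgroupPow N p, (⊤ : Subgroup G)⁆, (⊤ : Subgroup G)⁆ := by
    intro t
    rw [Subgroup.commutator_comm]
    exact Subgroup.commutator_mem_commutator (Subgroup.mem_top _) hd
  exact commEl_pow_prime_mem hp hp2 _
    (Subgroup.mem_sup_right (pow_mem_subgroupPow hc p))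
    (Subgroup.mem_sup_left (he _)) (Subgroup.mem_sup_left (he _))

theorem agemo_commutator_top (hp : p.Prime) (hp2 : p ≠ 2) (h : PowP p G) (k : ℕ) :
    ⁅agemo p G k, (⊤ : Subgroup G)⁆ ≤ agemo p G (k + 1) := by
  have := h.isNilpotent hp
  induction k with
  | zero => exact h.pow
  | succ k ih => exact commutator_subgroupPow_top_le hp hp2 _ ih

theorem commEl_mem_agemo_left (hp : p.Prime) (hp2 : p ≠ 2) (h : PowP p G) {k : ℕ} {x : G}
    (hx : x ∈ agemo p G k) (y : G) : ⁅x, y⁆ ∈ agemo p G (k + 1) :=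
  agemo_commutator_top hp hp2 h k (Subgroup.commutator_mem_commutator hx (Subgroup.mem_top y))

theorem commEl_mem_agemo_right (hp : p.Prime) (hp2 : p ≠ 2) (h : PowP p G) {k : ℕ} {x : G}
    (hx : x ∈ agemo p G k) (y : G) : ⁅y, x⁆ ∈ agemo p G (k + 1) := by
  rw [← commutatorElement_inv x y]
  exact inv_mem (commEl_mem_agemo_left hp hp2 h hx y)

theorem agemo_commutator (hp : p.Prime) (hp2 : p ≠ 2) (h : PowP p G) (a b : ℕ) :
    ⁅agemo p G a, agemo p G b⁆ ≤ agemo p G (a + b + 1) := by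
  induction a with
  | zero =>
    rw [Nat.zero_add, Subgroup.commutator_comm]
    exact (Subgroup.commutator_mono le_rfl le_top).trans (agemo_commutator_top hp hp2 h b)
  | succ a ih =>
    refine commutator_subgroupPow_le fun x hx y hy => ?_
    have hc := ih (Subgroup.commutator_mem_commutator hx hy)
    have e : a + 1 + b + 1 = a + b + 1 + 1 := by omega
    rw [e]
    exact commEl_pow_mem _ (pow_mem_agemo_succ hc) (commEl_mem_agemo_right hp hp2 h hc x)

theorem exists_agemo_eq_bot (hp : p.Prime) (h : PowP p G) : ∃ k, agemo p G k = ⊥ := by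
  have := h.fin
  have : ∃ k, agemo p G k ≤ agemo p G (k + 1) := by
    obtain ⟨n, hn⟩ := WellFoundedLT.antitone_chain_condition agemo_antitone (α := Subgroup G)
      (f := agemo p G)
    exact ⟨n, (hn (n + 1) (Nat.le_succ n)).le⟩
  obtain ⟨k, hk⟩ := this
  exact ⟨k, eq_bot_of_le_subgroupPow hp h.pgroup hk⟩

/-- Modulo `P (k + 2)`, `p`-th powering is multiplicative on products `x * y` with `y ∈ P k`: the
commutator lies in `P (k + 1)`, hence is central of exponent `p` modulo `P (k + 2)`. -/
theorem mul_pow_mk_agemo (hp : p.Prime) (hp2 : p ≠ 2) (h : PowP p G) {k : ℕ} {x y : G}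
    (hy : y ∈ agemo p G k) :
    (((x * y) ^ p : G) : G ⧸ agemo p G (k + 2)) = ((x ^ p * y ^ p : G) : G ⧸ agemo p G (k + 2)) := by
  have hc := commEl_mem_agemo_left hp hp2 h hy x
  exact mul_pow_prime_mk hp hp2 _ (pow_mem_agemo_succ hc)
    (commEl_mem_agemo_right hp hp2 h hc _) (commEl_mem_agemo_right hp hp2 h hc _)

theorem exists_pow_approx (hp : p.Prime) (hp2 : p ≠ 2) (h : PowP p G) {k : ℕ} {x : G}
    (hx : x ∈ agemo p G (k + 1)) :
    ∃ u ∈ agemo p G k, ((u ^ p : G) : G ⧸ agemo p G (k + 2)) = x := by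
  change x ∈ Subgroup.closure _ at hx
  induction hx using Subgroup.closure_induction with
  | mem x hx => obtain ⟨u, hu, rfl⟩ := hx; exact ⟨u, hu, rfl⟩
  | one => exact ⟨1, one_mem _, by simp⟩
  | mul a b _ _ ha hb =>
    obtain ⟨u, hu, hu'⟩ := ha
    obtain ⟨v, hv, hv'⟩ := hb
    refine ⟨u * v, mul_mem hu hv, ?_⟩
    rw [mul_pow_mk_agemo hp hp2 h hv, QuotientGroup.mk_mul, hu', hv', QuotientGroup.mk_mul]
  | inv a _ ha =>
    obtain ⟨u, hu, hu'⟩ := ha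
    exact ⟨u⁻¹, inv_mem hu, by rw [inv_pow, QuotientGroup.mk_inv, hu', QuotientGroup.mk_inv]⟩

/-- Every element of `(P m) ^ p` is the `p`-th power of a single element of `P m`: a root modulo
`P (m + j + 1)` is improved to one modulo `P (m + j + 2)`, and the series terminates. -/
theorem exists_pow_eq_of_mem_agemo_succ (hp : p.Prime) (hp2 : p ≠ 2) (h : PowP p G) {m : ℕ} {x : G}
    (hx : x ∈ agemo p G (m + 1)) : ∃ g ∈ agemo p G m, g ^ p = x := by
  have key : ∀ j, ∃ g ∈ agemo p G m, (g ^ p)⁻¹ * x ∈ agemo p G (m + j + 1) := by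
    intro j
    induction j with
    | zero => exact ⟨1, one_mem _, by simpa using hx⟩
    | succ j ih =>
      obtain ⟨g, hg, hgx⟩ := ih
      obtain ⟨u, hu, hu'⟩ := exists_pow_approx hp hp2 h hgx
      refine ⟨g * u, mul_mem hg (agemo_antitone (Nat.le_add_right m j) hu), ?_⟩
      have e : m + (j + 1) + 1 = m + j + 2 := by omega
      rw [e, ← QuotientGroup.eq, mul_pow_mk_agemo hp hp2 h hu, QuotientGroup.mk_mul, hu',
        ← QuotientGroup.mk_mul, mul_inv_cancel_left]
  obtain ⟨k, hk⟩ := exists_agemo_eq_bot hp h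
  obtain ⟨g, hg, hgx⟩ := key k
  have hb : (g ^ p)⁻¹ * x ∈ (⊥ : Subgroup G) :=
    hk ▸ agemo_antitone (by omega : k ≤ m + k + 1) hgx
  exact ⟨g, hg, inv_mul_eq_one.1 (Subgroup.mem_bot.1 hb)⟩

theorem exists_pow_eq_of_mem_agemo (hp : p.Prime) (hp2 : p ≠ 2) (h : PowP p G) {k : ℕ} {x : G}
    (hx : x ∈ agemo p G k) : ∃ g, g ^ p ^ k = x := by
  induction k generalizing x with
  | zero => exact ⟨x, by simp⟩
  | succ k ih =>
    obtain ⟨u, hu, rfl⟩ := exists_pow_eq_of_mem_agemo_succ hp hp2 h hx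
    obtain ⟨g, rfl⟩ := ih hu
    exact ⟨g, by rw [pow_succ, pow_mul]⟩

theorem subgroupPow_eq_agemo (hp : p.Prime) (hp2 : p ≠ 2) (h : PowP p G) (k : ℕ) :
    subgroupPow (⊤ : Subgroup G) (p ^ k) = agemo p G k := by
  apply le_antisymm
  · exact subgroupPow_le_iff.2 fun x _ => pow_mem_agemo x k
  · intro x hx
    obtain ⟨g, rfl⟩ := exists_pow_eq_of_mem_agemo hp hp2 h hx
    exact pow_mem_subgroupPow (Subgroup.mem_top g) _

end Agemo

/-! ### Orders of elements and commutators in powerful groups -/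

/-- The elements of order dividing `p` are closed under multiplication. -/
def MulTors (p : ℕ) (G : Type u) [Group G] : Prop :=
  ∀ x y : G, x ^ p = 1 → y ^ p = 1 → (x * y) ^ p = 1

/-- Every `g ^ p ^ i` of order dividing `p` commutes with every element of order dividing
`p ^ i`. -/
def PowComm (p i : ℕ) (G : Type u) [Group G] : Prop :=
  ∀ g y : G, g ^ p ^ (i + 1) = 1 → y ^ p ^ i = 1 → ⁅g ^ p ^ i, y⁆ = 1

section Core

variable {G : Type u} [Group G] {p : ℕ}

theorem mk_pow_eq_one_iff (N : Subgroup G) [N.Normal] (x : G) (n : ℕ) :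
    (x : G ⧸ N) ^ n = 1 ↔ x ^ n ∈ N := by
  rw [← QuotientGroup.mk_pow, QuotientGroup.eq_one_iff]

/-- If the elements of order dividing `p` in a normal subgroup `N` are closed under
multiplication, they form a normal subgroup of the whole group. -/
theorem exists_torsion_subgroup (N : Subgroup G) [hN : N.Normal] (h : MulTors p N) :
    ∃ V : Subgroup G, V.Normal ∧ ∀ x, x ∈ V ↔ x ∈ N ∧ x ^ p = 1 := by
  refine ⟨{ carrier := {x | x ∈ N ∧ x ^ p = 1}
            mul_mem' := ?_
            one_mem' := ⟨one_mem N, one_pow p⟩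
            inv_mem' := ?_ }, ⟨?_⟩, fun x => Iff.rfl⟩
  · rintro a b ⟨ha, ha'⟩ ⟨hb, hb'⟩
    refine ⟨mul_mem ha hb, ?_⟩
    have := h ⟨a, ha⟩ ⟨b, hb⟩ (Subtype.ext (by simpa using ha')) (Subtype.ext (by simpa using hb'))
    simpa using congrArg Subtype.val this
  · rintro a ⟨ha, ha'⟩
    exact ⟨inv_mem ha, by rw [inv_pow, ha', inv_one]⟩
  · rintro x ⟨hx, hx'⟩ g
    exact ⟨hN.conj_mem x hx g, by rw [conj_pow, hx']; simp⟩

/-- The subgroup `⟨y⟩ G^p` is powerful, since it is abelian modulo `[G^p, G] ≤ (G^p)^p`. -/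
theorem powP_zpowers_sup (hp : p.Prime) (hp2 : p ≠ 2) (h : PowP p G) (y : G) :
    PowP p (Subgroup.zpowers y ⊔ agemo p G 1 : Subgroup G) := by
  refine h.subgroup _ ?_
  have h1 : ⁅Subgroup.zpowers y ⊔ agemo p G 1, Subgroup.zpowers y ⊔ agemo p G 1⁆
      ≤ agemo p G 2 := by
    rw [Subgroup.zpowers_eq_closure, ← (agemo p G 1).closure_eq, ← Subgroup.closure_union]
    refine commutator_closure_le ?_
    rintro s hs t ht
    rcases ht with ht | ht
    · rcases hs with hs | hs
      · rw [Set.mem_singleton_iff] at hs ht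
        rw [hs, ht, commutatorElement_self]; exact one_mem _
      · exact commEl_mem_agemo_left hp hp2 h hs t
    · exact commEl_mem_agemo_right hp hp2 h ht s
  exact h1.trans (subgroupPow_mono le_sup_right p)

/-- If `y ^ p = 1` and `G = ⟨y⟩ G^p`, then `G^p = (G^p)^p`, so `G^p = 1` and `G` is abelian. -/
theorem agemo_one_eq_bot (hp : p.Prime) (hp2 : p ≠ 2) (h : PowP p G) {y : G} (hy : y ^ p = 1)
    (htop : (Subgroup.zpowers y ⊔ agemo p G 1 : Subgroup G) = ⊤) : agemo p G 1 = ⊥ := by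
  have := h.fin
  refine eq_bot_of_le_subgroupPow hp h.pgroup ?_
  change subgroupPow ⊤ p ≤ agemo p G 2
  refine subgroupPow_le_iff.2 fun x hx => ?_
  rw [← htop, Subgroup.mem_sup_of_normal_right] at hx
  obtain ⟨a, ha, b, hb, rfl⟩ := hx
  obtain ⟨n, rfl⟩ := Subgroup.mem_zpowers_iff.1 ha
  have hc : Commute ((y ^ n : G) : G ⧸ agemo p G 2) (b : G ⧸ agemo p G 2) := by
    rw [commute_mk_iff]; exact commEl_mem_agemo_right hp hp2 h hb _
  rw [← mk_pow_eq_one_iff, QuotientGroup.mk_mul, hc.mul_pow, ← QuotientGroup.mk_pow,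
    ← QuotientGroup.mk_pow, ← zpow_natCast, ← zpow_mul, mul_comm, zpow_mul, zpow_natCast, hy,
    one_zpow, QuotientGroup.mk_one, one_mul, QuotientGroup.eq_one_iff]
  exact pow_mem_agemo_succ hb

/-- If the proper powerful subgroups satisfy `MulTors`, then `⁅x, y⁆ ^ p = 1`
whenever `y ^ p = 1`: the commutator is a product of two conjugates of `y ^ (± 1)`, both lying in
the powerful subgroup `⟨y⟩ G^p`. -/
theorem commEl_pow_eq_one_of_pow_eq_one (hp : p.Prime) (hp2 : p ≠ 2) (h : PowP p G)
    (ih : ∀ K : Subgroup G, K ≠ ⊤ → PowP p K → MulTors p K) (x : G) {y : G} (hy : y ^ p = 1) :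
    ⁅x, y⁆ ^ p = 1 := by
  by_cases htop : (Subgroup.zpowers y ⊔ agemo p G 1 : Subgroup G) = ⊤
  · have hb := agemo_one_eq_bot hp hp2 h hy htop
    have hm : ⁅x, y⁆ ∈ agemo p G 1 :=
      commEl_mem_agemo_left (k := 0) hp hp2 h (Subgroup.mem_top x) y
    rw [hb, Subgroup.mem_bot] at hm
    rw [hm, one_pow]
  · have hR := ih _ htop (powP_zpowers_sup hp hp2 h y)
    set K : Subgroup G := Subgroup.zpowers y ⊔ agemo p G 1 with hK
    have hyK : y ∈ K := Subgroup.mem_sup_left (Subgroup.mem_zpowers y)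
    have hcK : ⁅x, y⁆ ∈ K := Subgroup.mem_sup_right
      (commEl_mem_agemo_left (k := 0) hp hp2 h (Subgroup.mem_top x) y)
    have e : x * y * x⁻¹ = ⁅x, y⁆ * y := by rw [commutatorElement_def]; group
    have hxy : x * y * x⁻¹ ∈ K := e ▸ mul_mem hcK hyK
    have := hR ⟨_, hxy⟩ ⟨_, inv_mem hyK⟩
      (Subtype.ext (by simp [conj_pow, hy])) (Subtype.ext (by simp [hy]))
    have := congrArg Subtype.val this
    simpa [commutatorElement_def] using this

/-- Elements of order dividing `p` in `P i` commute with elements of order dividing `p ^ i`. -/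
theorem PowComm.commute (hp : p.Prime) (hp2 : p ≠ 2) (h : PowP p G) {i : ℕ} (hS : PowComm p i G)
    {z y : G} (hz : z ∈ agemo p G i) (hz' : z ^ p = 1) (hy : y ^ p ^ i = 1) : Commute z y := by
  obtain ⟨g, rfl⟩ := exists_pow_eq_of_mem_agemo hp hp2 h hz
  rw [← commutatorElement_eq_one_iff_commute]
  exact hS g y (by rw [pow_succ, pow_mul, hz']) hy

/-- The order statements for all finite powerful `p`-groups, by simultaneous induction on the
group order: `PowComm p 2` for `G` uses `PowComm p 1` and `PowComm p 2` for proper quotients,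
`PowComm p 1` uses `PowComm p 2` for `G` itself, and `MulTors` uses `PowComm p 1` for `G`. -/
theorem core (hp : p.Prime) (hp2 : p ≠ 2) (n : ℕ) : ∀ (G : Type u) [Group G], Nat.card G = n →
    PowP p G → MulTors p G ∧ PowComm p 1 G ∧ PowComm p 2 G := by
  induction n using Nat.strong_induction_on with
  | _ n ih =>
  intro G _ hn h
  have hfin := h.fin
  have hnil := h.isNilpotent hp
  have ihK : ∀ K : Subgroup G, K ≠ ⊤ → PowP p K → MulTors p K := fun K hK hPK =>
    (ih _ (hn ▸ card_subgroup_lt hK) K rfl hPK).1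
  have ihQ : ∀ N : Subgroup G, [N.Normal] → N ≠ ⊥ →
      PowComm p 1 (G ⧸ N) ∧ PowComm p 2 (G ⧸ N) := fun N _ hN =>
    (ih _ (hn ▸ card_quotient_lt hN) (G ⧸ N) rfl (h.quotient N)).2
  have step1 : ∀ x y : G, y ^ p = 1 → ⁅x, y⁆ ^ p = 1 := fun x y hy =>
    commEl_pow_eq_one_of_pow_eq_one hp hp2 h ihK x hy
  -- In the quotient by the elements of order dividing `p` in `G^p`, the orders of `g` and `y`
  -- divide `p ^ 2` and `p`, so `PowComm p 1` applies.
  have stepz : ∀ g y : G, g ^ p ^ 3 = 1 → y ^ p ^ 2 = 1 → ⁅g ^ p, y⁆ ^ p = 1 := by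
    intro g y hg hy
    by_cases hP : agemo p G 1 = ⊥
    · have : g ^ p ∈ agemo p G 1 := pow_mem_agemo_succ (Subgroup.mem_top g)
      rw [hP, Subgroup.mem_bot] at this
      rw [this, commutatorElement_one_left, one_pow]
    · have hPtop : agemo p G 1 ≠ ⊤ := by
        intro e
        refine hP ?_
        have : (⊤ : Subgroup G) = ⊥ := eq_bot_of_le_subgroupPow hp h.pgroup e.ge
        rw [e, this]
      have hPP : PowP p (agemo p G 1) := h.subgroup _
        ((Subgroup.commutator_mono le_rfl le_top).trans (agemo_commutator_top hp hp2 h 1))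
      obtain ⟨V, hV, hVm⟩ := exists_torsion_subgroup (agemo p G 1) (ihK _ hPtop hPP)
      have hVbot : V ≠ ⊥ := by
        have : Fact p.Prime := ⟨hp⟩
        have : Nontrivial (agemo p G 1) := (Subgroup.nontrivial_iff_ne_bot _).2 hP
        obtain ⟨m, hm0, hm⟩ := hPP.pgroup.nontrivial_iff_card.1 this
        obtain ⟨x, hx⟩ := exists_prime_orderOf_dvd_card' (G := agemo p G 1) p
          (hm ▸ dvd_pow_self p hm0.ne')
        have hxV : (x : G) ∈ V := (hVm _).2 ⟨x.2, by
          have hxp : x ^ p = 1 := orderOf_dvd_iff_pow_eq_one.1 hx.dvd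
          rw [← Subgroup.coe_pow, hxp, Subgroup.coe_one]⟩
        intro hb
        rw [hb, Subgroup.mem_bot] at hxV
        rw [OneMemClass.coe_eq_one] at hxV
        rw [hxV, orderOf_one] at hx
        exact hp.one_lt.ne hx
      have := (ihQ V hVbot).1 (g : G ⧸ V) (y : G ⧸ V)
        (by
          rw [mk_pow_eq_one_iff, hVm]
          refine ⟨agemo_antitone (by norm_num) (pow_mem_agemo g 2), ?_⟩
          rw [← pow_mul, ← pow_succ]; exact hg)
        (by
          rw [mk_pow_eq_one_iff, hVm]
          refine ⟨pow_mem_agemo y 1, ?_⟩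
          rw [← pow_mul, ← pow_succ]; exact hy)
      rw [pow_one, ← QuotientGroup.mk_pow, commutatorElement_eq_one_iff_commute, commute_mk_iff,
        hVm] at this
      exact this.2
  have hS2 : PowComm p 2 G := by
    -- `D` is generated by the commutators to be killed; it is either central or, by induction
    -- applied to `G / [D, G]`, contained in `[D, G]`, hence trivial.
    set S : Set G := {t | ∃ g y : G, g ^ p ^ 3 = 1 ∧ y ^ p ^ 2 = 1 ∧ ⁅g ^ p ^ 2, y⁆ = t} with hSdef
    have hDn : (Subgroup.closure S).Normal := by
      refine closure_normal_of_conj ?_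
      rintro _ ⟨g, y, hg, hy, rfl⟩ c
      refine ⟨c * g * c⁻¹, c * y * c⁻¹, by rw [conj_pow, hg]; simp, by rw [conj_pow, hy]; simp, ?_⟩
      rw [conj_pow, commutatorElement_def, commutatorElement_def]; group
    have hmem : ∀ g y : G, g ^ p ^ 3 = 1 → y ^ p ^ 2 = 1 → ⁅g ^ p ^ 2, y⁆ ∈ Subgroup.closure S :=
      fun g y hg hy => Subgroup.subset_closure ⟨g, y, hg, hy, rfl⟩
    by_cases hE : ⁅Subgroup.closure S, (⊤ : Subgroup G)⁆ = ⊥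
    · intro g y hg hy
      have hz : ⁅g ^ p, y⁆ ^ p = 1 := stepz g y hg hy
      have hzP : ⁅g ^ p, y⁆ ∈ agemo p G 2 :=
        commEl_mem_agemo_left hp hp2 h (pow_mem_agemo_succ (k := 0) (Subgroup.mem_top g)) y
      have hd : ⁅g ^ p, ⁅g ^ p, y⁆⁆ ∈ Subgroup.closure S := by
        rw [← commutatorElement_inv]
        obtain ⟨u, hu⟩ := exists_pow_eq_of_mem_agemo hp hp2 h hzP
        refine inv_mem ?_
        have h1 : ⁅g ^ p, y⁆ = u ^ p ^ 2 := hu.symm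
        rw [h1]
        refine hmem u _ ?_ ?_
        · rw [pow_succ, pow_mul, hu, hz]
        · rw [← pow_mul, ← pow_succ']; exact hg
      have hcent : ∀ t : G, Commute t ⁅g ^ p, ⁅g ^ p, y⁆⁆ := by
        intro t
        apply Commute.symm
        rw [← commutatorElement_eq_one_iff_commute, ← Subgroup.mem_bot, ← hE]
        exact Subgroup.commutator_mem_commutator hd (Subgroup.mem_top t)
      rw [pow_two, pow_mul]
      exact commEl_pow_prime_eq_one hp hp2 hz (hcent _) (hcent _)
    · have hle : Subgroup.closure S ≤ ⁅Subgroup.closure S, (⊤ : Subgroup G)⁆ := by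
        rw [Subgroup.closure_le]
        rintro _ ⟨g, y, hg, hy, rfl⟩
        have := (ihQ _ hE).2 (g : G ⧸ ⁅Subgroup.closure S, (⊤ : Subgroup G)⁆) y
          (by rw [mk_pow_eq_one_iff, hg]; exact one_mem _)
          (by rw [mk_pow_eq_one_iff, hy]; exact one_mem _)
        rw [← QuotientGroup.mk_pow, commutatorElement_eq_one_iff_commute, commute_mk_iff] at this
        exact this
      have hD := eq_bot_of_le_commutator hle
      intro g y hg hy
      have := hmem g y hg hy
      rwa [hD, Subgroup.mem_bot] at this
  have hS1 : PowComm p 1 G := by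
    intro x y hx hy
    rw [pow_one] at hy ⊢
    have hz : ⁅x, y⁆ ^ p = 1 := step1 x y hy
    have hzP : ⁅x, y⁆ ∈ agemo p G 1 :=
      commEl_mem_agemo_left (k := 0) hp hp2 h (Subgroup.mem_top x) y
    have hd : ⁅x, ⁅x, y⁆⁆ ^ p = 1 := step1 _ _ hz
    have hdP : ⁅x, ⁅x, y⁆⁆ ∈ agemo p G 2 := commEl_mem_agemo_right hp hp2 h hzP x
    exact commEl_pow_prime_eq_one hp hp2 hz (hS2.commute hp hp2 h hdP hd hx).symm
      (hS2.commute hp hp2 h hdP hd (by rw [pow_two, pow_mul, hz, one_pow])).symm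
  refine ⟨?_, hS1, hS2⟩
  intro x y hx hy
  have hc : ⁅y, x⁆ ^ p = 1 := step1 y x hx
  have hcP : ⁅y, x⁆ ∈ agemo p G 1 :=
    commEl_mem_agemo_left (k := 0) hp hp2 h (Subgroup.mem_top y) x
  rw [mul_pow_prime hp hp2 hc (hS1.commute hp hp2 h hcP hc (by rwa [pow_one])).symm
    (hS1.commute hp hp2 h hcP hc (by rwa [pow_one])).symm, hx, hy, one_mul]

theorem PowP.mulTors (hp : p.Prime) (hp2 : p ≠ 2) (h : PowP p G) : MulTors p G :=
  (core hp hp2 _ G rfl h).1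

theorem PowP.powComm_one (hp : p.Prime) (hp2 : p ≠ 2) (h : PowP p G) : PowComm p 1 G :=
  (core hp hp2 _ G rfl h).2.1

theorem PowP.powComm_two (hp : p.Prime) (hp2 : p ≠ 2) (h : PowP p G) : PowComm p 2 G :=
  (core hp hp2 _ G rfl h).2.2

/-- In a powerful group the elements of order dividing `p` form a normal subgroup. -/
theorem PowP.exists_omega_one (hp : p.Prime) (hp2 : p ≠ 2) (h : PowP p G) :
    ∃ V : Subgroup G, V.Normal ∧ ∀ x, x ∈ V ↔ x ^ p = 1 := by
  have hT : MulTors p (⊤ : Subgroup G) := by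
    intro x y hx hy
    refine Subtype.ext ?_
    have := h.mulTors hp hp2 x y (by simpa using congrArg Subtype.val hx)
      (by simpa using congrArg Subtype.val hy)
    simpa using this
  obtain ⟨V, hV, hm⟩ := exists_torsion_subgroup (⊤ : Subgroup G) hT
  exact ⟨V, hV, fun x => by rw [hm]; simp⟩

theorem commEl_sq_pow_eq_one (hp : p.Prime) (hp2 : p ≠ 2) (h : PowP p G) {g y : G}
    (hg : g ^ p ^ 4 = 1) (hy : y ^ p ^ 3 = 1) : ⁅g ^ p ^ 2, y⁆ ^ p = 1 := by
  obtain ⟨V, hV, hm⟩ := h.exists_omega_one hp hp2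
  have := (h.quotient V).powComm_two hp hp2 (g : G ⧸ V) y
    (by rw [mk_pow_eq_one_iff, hm, ← pow_mul, ← pow_succ]; exact hg)
    (by rw [mk_pow_eq_one_iff, hm, ← pow_mul, ← pow_succ]; exact hy)
  rwa [← QuotientGroup.mk_pow, commutatorElement_eq_one_iff_commute, commute_mk_iff, hm] at this

theorem PowP.powComm_three (hp : p.Prime) (hp2 : p ≠ 2) (h : PowP p G) : PowComm p 3 G := by
  intro g y hg hy
  have hz := commEl_sq_pow_eq_one hp hp2 h hg hy
  have hzP : ⁅g ^ p ^ 2, y⁆ ∈ agemo p G 3 := commEl_mem_agemo_left hp hp2 h (pow_mem_agemo g 2) y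
  have hc : Commute (g ^ p ^ 2) ⁅g ^ p ^ 2, y⁆ :=
    ((h.powComm_two hp hp2).commute hp hp2 h (agemo_antitone (by norm_num) hzP) hz
      (by rw [← pow_mul, ← pow_add]; exact hg)).symm
  rw [pow_succ, pow_mul, commEl_pow_left hc, hz]

/-- The base case of `commEl_two_one_pow`. -/
theorem commEl_two_one_eq_one (hp : p.Prime) (hp2 : p ≠ 2) (h : PowP p G) {x y : G}
    (hx : x ^ p ^ 4 = 1) (hy : y ^ p ^ 3 = 1) : ⁅x ^ p ^ 2, y ^ p⁆ = 1 := by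
  have hz := commEl_sq_pow_eq_one hp hp2 h hx hy
  have hzP : ⁅x ^ p ^ 2, y⁆ ∈ agemo p G 3 := commEl_mem_agemo_left hp hp2 h (pow_mem_agemo x 2) y
  rw [commEl_pow_right ((h.powComm_three hp hp2).commute hp hp2 h hzP hz hy).symm, hz]

/-- Factoring out the elements of order dividing `p`, `n` times, reduces to `n = 0`. -/
theorem commEl_two_one_pow (hp : p.Prime) (hp2 : p ≠ 2) (n : ℕ) :
    ∀ (G : Type u) [Group G], PowP p G → ∀ x y : G, x ^ p ^ (n + 4) = 1 → y ^ p ^ (n + 3) = 1 →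
      ⁅x ^ p ^ 2, y ^ p⁆ ^ p ^ n = 1 := by
  induction n with
  | zero =>
    intro G _ h x y hx hy
    rw [pow_zero, pow_one]
    exact commEl_two_one_eq_one hp hp2 h (by simpa using hx) (by simpa using hy)
  | succ n ih =>
    intro G _ h x y hx hy
    obtain ⟨V, hV, hm⟩ := h.exists_omega_one hp hp2
    have := ih (G ⧸ V) (h.quotient V) x y
      (by rw [mk_pow_eq_one_iff, hm, ← pow_mul, ← pow_succ, add_right_comm]; exact hx)
      (by rw [mk_pow_eq_one_iff, hm, ← pow_mul, ← pow_succ, add_right_comm]; exact hy)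
    have h2 : ⁅x ^ p ^ 2, y ^ p⁆ ^ p ^ n ∈ V := by
      rw [← mk_pow_eq_one_iff]; exact this
    rw [hm] at h2
    rw [pow_succ p n, pow_mul, h2]

theorem commEl_one_one_pow (hp : p.Prime) (hp2 : p ≠ 2) (n : ℕ) :
    ∀ (G : Type u) [Group G], PowP p G → ∀ x y : G, x ^ p ^ (n + 2) = 1 → y ^ p ^ (n + 2) = 1 →
      ⁅x ^ p, y ^ p⁆ ^ p ^ n = 1 := by
  induction n with
  | zero =>
    intro G _ h x y hx hy
    have := h.powComm_one hp hp2 x (y ^ p) (by simpa using hx)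
      (by rw [pow_one, ← pow_mul, ← pow_two]; simpa using hy)
    rw [pow_one] at this
    rw [this, one_pow]
  | succ n ih =>
    intro G _ h x y hx hy
    obtain ⟨V, hV, hm⟩ := h.exists_omega_one hp hp2
    have := ih (G ⧸ V) (h.quotient V) x y
      (by rw [mk_pow_eq_one_iff, hm, ← pow_mul, ← pow_succ, add_right_comm]; exact hx)
      (by rw [mk_pow_eq_one_iff, hm, ← pow_mul, ← pow_succ, add_right_comm]; exact hy)
    have h2 : ⁅x ^ p, y ^ p⁆ ^ p ^ n ∈ V := by
      rw [← mk_pow_eq_one_iff]; exact this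
    rw [hm] at h2
    rw [pow_succ p n, pow_mul, h2]

end Core

/-! ### Commutators of omega subgroups -/

section Omega

attribute [local instance] subgroupPow_normal

variable {G : Type u} [Group G] {p : ℕ}

theorem agemo_one_eq : agemo p G 1 = subgroupPow ⊤ p := rfl

/-- On generators `x = a ^ p`, `y = b ^ p`, the commutator `⁅x, y⁆ ∈ P 3` is some `c ^ p ^ 3`, and
its order bound `p ^ (i - 1)` puts `c ^ p ^ 2` in `Ω_i(P 2)`. -/
theorem commutator_omega_le (hp : p.Prime) (hp2 : p ≠ 2) (h : PowP p G) {i : ℕ} (hi : 1 ≤ i) :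
    ⁅omegaSubgroup p i (agemo p G 1), omegaSubgroup p i (agemo p G 1)⁆ ≤
      subgroupPow (omegaSubgroup p i (agemo p G 2)) p := by
  obtain ⟨n, rfl⟩ := Nat.exists_eq_add_of_le' hi
  refine commutator_closure_le ?_
  rintro x ⟨hx, hx'⟩ y ⟨hy, hy'⟩
  obtain ⟨a, rfl⟩ := exists_pow_eq_of_mem_agemo hp hp2 h hx
  obtain ⟨b, rfl⟩ := exists_pow_eq_of_mem_agemo hp hp2 h hy
  obtain ⟨c, hc⟩ := exists_pow_eq_of_mem_agemo hp hp2 h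
    (agemo_commutator hp hp2 h 1 1 (Subgroup.commutator_mem_commutator hx hy))
  rw [← pow_mul, ← pow_add] at hx' hy'
  have e : 1 + (n + 1) = n + 2 := by omega
  rw [e] at hx' hy'
  have ho := commEl_one_one_pow hp hp2 n G h a b hx' hy'
  rw [pow_one] at hc ⊢
  have hc2 : ⁅a ^ p, b ^ p⁆ = (c ^ p ^ 2) ^ p := by
    rw [← hc, ← pow_mul, ← pow_succ]
  rw [hc2]
  refine pow_mem_subgroupPow (mem_omegaSubgroup (pow_mem_agemo c 2) ?_) p
  rw [hc2, ← pow_mul, ← pow_succ'] at ho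
  exact ho

/-- On generators `x = a ^ p ^ 2`, `y = b ^ p`, the commutator `⁅x, y⁆ ∈ P 4` is some `c ^ p ^ 4`,
and its order bound `p ^ (i - 2)` puts `c ^ p ^ 2` in `Ω_i(P 1)`. -/
theorem commutator_omega_two_le (hp : p.Prime) (hp2 : p ≠ 2) (h : PowP p G) {i : ℕ} (hi : 1 ≤ i) :
    ⁅omegaSubgroup p i (agemo p G 2), omegaSubgroup p i (agemo p G 1)⁆ ≤
      subgroupPow (omegaSubgroup p i (agemo p G 1)) (p ^ 2) := by
  refine commutator_closure_le ?_
  rintro x ⟨hx, hx'⟩ y ⟨hy, hy'⟩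
  obtain ⟨c, hc⟩ := exists_pow_eq_of_mem_agemo hp hp2 h
    (agemo_commutator hp hp2 h 2 1 (Subgroup.commutator_mem_commutator hx hy))
  obtain ⟨a, rfl⟩ := exists_pow_eq_of_mem_agemo hp hp2 h hx
  obtain ⟨b, rfl⟩ := exists_pow_eq_of_mem_agemo hp hp2 h hy
  rw [pow_one] at hc hy' ⊢
  -- For `i = 1` the commutator vanishes.
  obtain rfl | hi2 := hi.eq_or_lt
  · have := h.powComm_one hp hp2 (a ^ p) (b ^ p)
      (by rw [← pow_mul, ← pow_succ', pow_succ, pow_mul]; simpa using hx') hy'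
    rw [pow_one, ← pow_mul, ← pow_two] at this
    rw [this]; exact one_mem _
  · obtain ⟨n, rfl⟩ := Nat.exists_eq_add_of_le' hi2
    rw [← pow_mul, ← pow_add] at hx'
    rw [← pow_mul, ← pow_succ'] at hy'
    have ho := commEl_two_one_pow hp hp2 n G h a b
      (by rw [show n + 4 = 2 + (n + 2) by omega]; exact hx') hy'
    have hc2 : ⁅a ^ p ^ 2, b ^ p⁆ = (c ^ p ^ 2) ^ p ^ 2 := by
      rw [← hc, ← pow_mul, ← pow_add]
    rw [hc2]
    refine pow_mem_subgroupPow (mem_omegaSubgroup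
      (agemo_antitone (by norm_num) (pow_mem_agemo c 2)) ?_) _
    rw [hc2, ← pow_mul, ← pow_add] at ho
    rw [show n + 2 = 2 + n by omega]
    exact ho

end Omega

theorem omega_statement_6 (p : ℕ) (hp : p.Prime) (hp2 : p ≠ 2) (G : Type*) [Group G]
    [Finite G] (hG : IsPGroup p G) (hpow : IsPowerful p G) (i : ℕ) (hi : 1 ≤ i)
    (W : Subgroup G) (hW : W = omegaSubgroup p i (subgroupPow (⊤ : Subgroup G) p))
    (M : Subgroup (↥W ⧸ subgroupPow (⊤ : Subgroup ↥W) (p ^ 2)))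
    (hM : M = Subgroup.map (QuotientGroup.mk' (subgroupPow (⊤ : Subgroup ↥W) (p ^ 2)))
      ((omegaSubgroup p i (subgroupPow (⊤ : Subgroup G) (p ^ 2))).subgroupOf W)) :
    IsPowerfullyNilpotent p (↥W ⧸ subgroupPow (⊤ : Subgroup ↥W) (p ^ 2)) ∧
      powerfulNilpotencyClass p (↥W ⧸ subgroupPow (⊤ : Subgroup ↥W) (p ^ 2)) ≤ 2 ∧
      ⁅M, (⊤ : Subgroup (↥W ⧸ subgroupPow (⊤ : Subgroup ↥W) (p ^ 2)))⁆ ≤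
        subgroupPow (⊥ : Subgroup (↥W ⧸ subgroupPow (⊤ : Subgroup ↥W) (p ^ 2))) p ∧
      ⁅(⊤ : Subgroup (↥W ⧸ subgroupPow (⊤ : Subgroup ↥W) (p ^ 2))),
          (⊤ : Subgroup (↥W ⧸ subgroupPow (⊤ : Subgroup ↥W) (p ^ 2)))⁆ ≤
        subgroupPow M p := by
  have h : PowP p G := ⟨inferInstance, hG, by rw [IsPowerful, if_neg hp2] at hpow; exact hpow⟩
  rw [subgroupPow_eq_agemo hp hp2 h] at hM
  rw [← agemo_one_eq] at hW
  set O := omegaSubgroup p i (agemo p G 2) with hO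
  have hOW : O ≤ W := hW ▸ omegaSubgroup_mono (agemo_antitone (by norm_num))
  have h1 : ⁅W, W⁆ ≤ subgroupPow O p := hW ▸ commutator_omega_le hp hp2 h hi
  have h2 : ⁅O, W⁆ ≤ subgroupPow W (p ^ 2) := hW ▸ commutator_omega_two_le hp hp2 h hi
  have h1' : ⁅(⊤ : Subgroup W), (⊤ : Subgroup W)⁆ ≤ subgroupPow (O.subgroupOf W) p := by
    rw [← Subgroup.map_le_map_iff_of_injective W.subtype_injective, map_subgroupPow,
      Subgroup.map_commutator, ← MonoidHom.range_eq_map, Subgroup.range_subtype,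
      Subgroup.map_subgroupOf_eq_of_le hOW]
    exact h1
  have h2' : ⁅O.subgroupOf W, (⊤ : Subgroup W)⁆ ≤ subgroupPow (⊤ : Subgroup W) (p ^ 2) := by
    rw [← Subgroup.map_le_map_iff_of_injective W.subtype_injective, map_subgroupPow,
      Subgroup.map_commutator, ← MonoidHom.range_eq_map, Subgroup.range_subtype,
      Subgroup.map_subgroupOf_eq_of_le hOW]
    exact h2
  have hsurj := Subgroup.map_top_of_surjective _
    (QuotientGroup.mk'_surjective (subgroupPow (⊤ : Subgroup W) (p ^ 2)))
  have hA : ⁅M, (⊤ : Subgroup (↥W ⧸ subgroupPow (⊤ : Subgroup ↥W) (p ^ 2)))⁆ ≤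
      subgroupPow (⊥ : Subgroup (↥W ⧸ subgroupPow (⊤ : Subgroup ↥W) (p ^ 2))) p := by
    have := Subgroup.map_mono (f := QuotientGroup.mk' (subgroupPow (⊤ : Subgroup W) (p ^ 2))) h2'
    rw [Subgroup.map_commutator, hsurj, ← hM, QuotientGroup.map_mk'_self] at this
    exact this.trans bot_le
  have hB : ⁅(⊤ : Subgroup (↥W ⧸ subgroupPow (⊤ : Subgroup ↥W) (p ^ 2))),
      (⊤ : Subgroup (↥W ⧸ subgroupPow (⊤ : Subgroup ↥W) (p ^ 2)))⁆ ≤ subgroupPow M p := by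
    have := Subgroup.map_mono (f := QuotientGroup.mk' (subgroupPow (⊤ : Subgroup W) (p ^ 2))) h1'
    rw [Subgroup.map_commutator, hsurj, map_subgroupPow, ← hM] at this
    exact this
  have hchain : IsPowerfullyCentralChain p 2
      (fun k => match k with
        | 0 => (⊥ : Subgroup (↥W ⧸ subgroupPow (⊤ : Subgroup ↥W) (p ^ 2)))
        | 1 => M
        | _ => ⊤) := by
    refine ⟨rfl, rfl, ?_, ?_⟩
    · intro k hk
      interval_cases k
      · exact bot_le
      · exact le_top
    · intro k hk
      interval_cases k
      · exact hA
      · exact hB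
  refine ⟨⟨?_, 2, _, hchain⟩, Nat.sInf_le ⟨_, hchain⟩, hA, hB⟩
  rw [IsPowerful, if_neg hp2]
  exact hB.trans (subgroupPow_mono le_top p)
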